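/- Let Ω ⊂ ℂ be a bounded domain with (closure Ω)° = Ω, with ℂ \ closure(Ω) connected, and such that there exists M < ∞ with any two points of Ω joined by a path in Ω of length at most M. Then for every f continuous on closure(Ω) with all derivatives f⁽ᵏ⁾ extending continuously to closure(Ω), every ε > 0, and every n ∈ ℕ, there is a polynomial P with |P⁽ᵏ⁾ − f⁽ᵏ⁾| < ε on closure(Ω) for all 0 ≤ k ≤ n. -/

import Mathlib

/-- Two points are joined in `Ω` by a path of length at most `M`. -/
def JoinedLe (Ω : Set ℂ) (M : ℝ) (z w : ℂ) : Prop :=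
  ∃ γ : ℝ → ℂ, ContinuousOn γ (Set.Icc 0 1) ∧ γ 0 = z ∧ γ 1 = w ∧
    (∀ t ∈ Set.Icc (0:ℝ) 1, γ t ∈ Ω) ∧ eVariationOn γ (Set.Icc 0 1) ≤ ENNReal.ofReal M

/-!
If a polynomial is uniformly close to `f⁽ⁿ⁾`, its iterated primitives along paths of length at most
`M`, with matching constants of integration, are uniformly close to the lower derivatives. So
everything reduces to Mergelyan's theorem for `K = closure Ω`.

For Mergelyan's theorem, extend `f` to a continuous compactly supported `F` oscillating by at most
`ω` at scale `r`. The average of `F` over discs of radius `r` is `ω`-close to `F`, and by Fubini it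
is, up to the factor `2πi · πr²`, the Cauchy transform of the density `η ↦ ∮_{C(η, r)} F`. This
density is `O(rω)`, and by Cauchy's theorem it vanishes unless `η` lies within `r` of a point
`a ∉ K`. For such `η` the Cauchy kernel `1 / (z - η)` is replaced by `g z + (η - c) (g z)²`, where
`g` is a uniform limit of polynomials on `K` with `g z = O(1 / r)` and
`g z = 1 / (z - c) + O(r² / |z - c|³)` for some `c` near `a`. The error integrates to `O(r)`, so the
total error is `O(rω · r / r²) = O(ω)`.

Instead of a capacity estimate, `g` is built explicitly from a square root of `(z - b) / (z - a)`
on `K` with `|b - a| = r`, through the conformal map of the complement of a slit. The square root is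
continued in `b` along `Kᶜ`, which is connected and unbounded, until `b` reaches the circle.
-/

open Metric Filter Topology MeasureTheory
open scoped Polynomial NNReal

section UniformAlgebra

theorem exists_mem_comp_eq_of_isClosed {X : Type*} [TopologicalSpace X] [CompactSpace X]
    {A : Subalgebra ℂ C(X, ℂ)} (hA : IsClosed (A : Set C(X, ℂ))) {f : C(X, ℂ)} (hf : f ∈ A)
    {φ : ℂ → ℂ} {c : ℂ} {R : ℝ} (hR : 0 < R) (hφ : DifferentiableOn ℂ φ (ball c R))
    (hfR : ∀ x, f x ∈ ball c R) : ∃ g ∈ A, ∀ x, g x = φ (f x) := by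
  let g : C(X, ℂ) := ⟨φ ∘ f, hφ.continuousOn.comp_continuous f.continuous hfR⟩
  let h : C(X, ℂ) := f - algebraMap ℂ _ c
  have hh : h ∈ A := sub_mem hf (A.algebraMap_mem c)
  have hhR : ‖h‖ < R := (ContinuousMap.norm_lt_iff h hR).2 fun x => by
    simpa [h, dist_eq_norm] using hfR x
  obtain ⟨r, hhr, hrR⟩ := exists_between hhR
  obtain ⟨ρ, hrρ, hρR⟩ := exists_between hrR
  have hr : 0 < r := (norm_nonneg h).trans_lt hhr
  lift r to ℝ≥0 using hr.le
  lift ρ to ℝ≥0 using (hr.trans hrρ).le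
  have hseries : HasFPowerSeriesOnBall φ (cauchyPowerSeries φ c ρ) c ρ :=
    (hφ.mono (closedBall_subset_ball hρR)).hasFPowerSeriesOnBall
      (by exact_mod_cast hr.trans hrρ)
  have hunif : TendstoUniformly
      (fun n x => (cauchyPowerSeries φ c ρ).partialSum n (f x - c)) g atTop := by
    have hfr : f ⁻¹' ball c r = Set.univ := Set.eq_univ_of_forall fun x => by
      simpa [h, dist_eq_norm] using (h.norm_coe_le_norm x).trans_lt hhr
    have := (hseries.tendstoUniformlyOn' (by exact_mod_cast hrρ)).comp f
    rwa [hfr, tendstoUniformlyOn_univ] at this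
  have hlim : Tendsto (fun n => ∑ i ∈ Finset.range n, (cauchyPowerSeries φ c ρ).coeff i • h ^ i)
      atTop (𝓝 g) := by
    rw [ContinuousMap.tendsto_iff_tendstoUniformly]
    convert hunif using 3 with n x
    simp [FormalMultilinearSeries.partialSum, h, mul_comm]
  exact ⟨g, hA.mem_of_tendsto hlim (.of_forall fun n =>
    sum_mem fun i _ => A.smul_mem (pow_mem hh i) _), fun _ => rfl⟩

/-- The uniform algebra `P(K)` of a compact set `K`: the continuous functions on `K` that are
uniform limits of polynomials. -/
noncomputable abbrev uniformPolynomials (K : Set ℂ) [CompactSpace K] : Subalgebra ℂ C(K, ℂ) :=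
  (polynomialFunctions K).topologicalClosure

variable {K : Set ℂ} [CompactSpace K]

theorem toContinuousMapOn_mem_uniformPolynomials (p : ℂ[X]) :
    p.toContinuousMapOn K ∈ uniformPolynomials K :=
  Subalgebra.le_topologicalClosure _ <| by
    rw [← SetLike.mem_coe, polynomialFunctions_coe]
    exact ⟨p, rfl⟩

theorem exists_polynomial_norm_sub_lt {f : C(K, ℂ)} (hf : f ∈ uniformPolynomials K)
    {ε : ℝ} (hε : 0 < ε) : ∃ p : ℂ[X], ∀ z : K, ‖p.eval (z : ℂ) - f z‖ < ε := by
  rw [← SetLike.mem_coe, Subalgebra.topologicalClosure_coe, Metric.mem_closure_iff] at hf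
  obtain ⟨q, hq, hfq⟩ := hf ε hε
  rw [polynomialFunctions_coe] at hq
  obtain ⟨p, rfl⟩ := hq
  refine ⟨p, fun z => ?_⟩
  rw [norm_sub_rev, ← dist_eq_norm]
  exact (ContinuousMap.dist_apply_le_dist z).trans_lt hfq

theorem exists_mem_uniformPolynomials_inv_sub (hK : IsPreconnected Kᶜ) {b : ℂ}
    (hb : b ∉ K) : ∃ g ∈ uniformPolynomials K, ∀ z : K, g z = ((z : ℂ) - b)⁻¹ := by
  have : IsClosed (uniformPolynomials K : Set C(K, ℂ)) :=
    Subalgebra.isClosed_topologicalClosure _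
  let X : uniformPolynomials K :=
    ⟨Polynomial.X.toContinuousMapOn K, toContinuousMapOn_mem_uniformPolynomials _⟩
  have hspec : spectrum ℂ (X : C(K, ℂ)) = K := by
    ext
    simp [X, ContinuousMap.spectrum_eq_range]
  have hbX : b ∉ spectrum ℂ X := by
    rw [Subalgebra.spectrum_eq_of_isPreconnected_compl _ X (by rwa [hspec]), hspec]
    exact hb
  obtain ⟨u, hu⟩ := spectrum.notMem_iff.1 hbX
  refine ⟨-((u⁻¹ : (uniformPolynomials K)ˣ) : uniformPolynomials K),
    neg_mem (SetLike.coe_mem _), fun z => eq_inv_of_mul_eq_one_left ?_⟩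
  have hmul : (b - z) * ((u⁻¹ : (uniformPolynomials K)ˣ) : C(K, ℂ)) z = 1 := by
    simpa [hu, X] using congrArg (fun F : uniformPolynomials K => (F : C(K, ℂ)) z) u.mul_inv
  rw [ContinuousMap.neg_apply]
  linear_combination hmul

end UniformAlgebra

section SqrtBranch

theorem exists_mem_sq_eq_one_add {X : Type*} [TopologicalSpace X] [CompactSpace X]
    {A : Subalgebra ℂ C(X, ℂ)} (hA : IsClosed (A : Set C(X, ℂ))) {f : C(X, ℂ)} (hf : f ∈ A)
    (hf1 : ∀ x, ‖f x‖ < 1) : ∃ g ∈ A, ∀ x, g x ^ 2 = 1 + f x ∧ 0 < (g x).re := by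
  have hslit {u : ℂ} (hu : u ∈ ball (0 : ℂ) 1) : 1 + u ∈ Complex.slitPlane :=
    Complex.mem_slitPlane_of_norm_lt_one (mem_ball_zero_iff.1 hu)
  have hsqrt : DifferentiableOn ℂ (fun u => Complex.exp (Complex.log (1 + u) / 2)) (ball 0 1) :=
    ((((differentiableOn_const 1).add differentiableOn_id).clog fun _ => hslit).div_const 2).cexp
  obtain ⟨g, hgA, hg⟩ := exists_mem_comp_eq_of_isClosed hA hf one_pos hsqrt fun x =>
    mem_ball_zero_iff.2 (hf1 x)
  refine ⟨g, hgA, fun x => ?_⟩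
  have hx := hslit (mem_ball_zero_iff.2 (hf1 x))
  constructor
  · rw [hg, ← Complex.exp_nat_mul, Nat.cast_ofNat, mul_div_cancel₀ _ two_ne_zero,
      Complex.exp_log (Complex.slitPlane_ne_zero hx)]
  · have him : (Complex.log (1 + f x) / 2).im = Complex.arg (1 + f x) / 2 := by
      simp [Complex.log_im]
    have harg := Complex.mem_slitPlane_iff_arg.1 hx
    rw [hg, Complex.exp_re, him]
    exact mul_pos (Real.exp_pos _) (Real.cos_pos_of_mem_Ioo
      ⟨by linarith [Complex.neg_pi_lt_arg (1 + f x)],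
        by linarith [(Complex.arg_le_pi (1 + f x)).lt_of_ne harg.1]⟩)

theorem re_mul_pos_of_re_sq_pos {v w : ℂ} (hv : 0 < v.re) (hv2 : 0 < (v ^ 2).re) (hw : 0 < w.re)
    (hw2 : 0 < (w ^ 2).re) : 0 < (v * w).re := by
  have him {u : ℂ} (hu : 0 < u.re) (hu2 : 0 < (u ^ 2).re) : |u.im| < u.re := by
    refine abs_lt_of_sq_lt_sq ?_ hu.le
    have : (u ^ 2).re = u.re ^ 2 - u.im ^ 2 := by simp [sq]
    linarith
  have : v.im * w.im < v.re * w.re :=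
    calc v.im * w.im ≤ |v.im| * |w.im| := (le_abs_self _).trans (abs_mul _ _).le
      _ < v.re * w.re := mul_lt_mul'' (him hv hv2) (him hw hw2) (abs_nonneg _) (abs_nonneg _)
  rw [Complex.mul_re]
  linarith

variable {K : Set ℂ} [CompactSpace K] {a b b' : ℂ} {r : ℝ}

/-- `P(K)` contains a square root of `z ↦ (z - b) / (z - a)` that is the principal branch wherever
`r < ‖z - a‖`. -/
def HasSqrtBranch (K : Set ℂ) [CompactSpace K] (a : ℂ) (r : ℝ) (b : ℂ) : Prop :=
  ∃ v ∈ uniformPolynomials K, ∀ z : K, v z ^ 2 = (z - b) / (z - a) ∧ (r < ‖z - a‖ → 0 < (v z).re)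

theorem hasSqrtBranch_self (ha : a ∉ K) : HasSqrtBranch K a r a := by
  refine ⟨1, one_mem _, fun z => ⟨?_, fun _ => by simp⟩⟩
  rw [div_self (sub_ne_zero.2 (ne_of_mem_of_not_mem z.2 ha))]
  simp

theorem re_div_sub_pos {z : ℂ} (hb : ‖b - a‖ < ‖z - a‖) : 0 < ((z - b) / (z - a)).re := by
  have hza : z - a ≠ 0 := norm_pos_iff.1 ((norm_nonneg _).trans_lt hb)
  have hlt : ‖(b - a) / (z - a)‖ < 1 := by rwa [norm_div, div_lt_one (norm_pos_iff.2 hza)]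
  have heq : (z - b) / (z - a) = 1 - (b - a) / (z - a) := by
    field_simp
    ring
  rw [heq, Complex.sub_re, Complex.one_re, sub_pos]
  exact (Complex.re_le_norm _).trans_lt hlt

theorem HasSqrtBranch.of_forall_norm_sub_lt (hK : IsPreconnected Kᶜ) (h : HasSqrtBranch K a r b)
    (hbr : ‖b - a‖ ≤ r) (hbb' : ∀ z ∈ K, ‖b' - b‖ < ‖z - b‖) : HasSqrtBranch K a r b' := by
  obtain ⟨v, hvK, hv⟩ := h
  have hb : b ∉ K := fun hb => by simpa [(norm_nonneg _).not_gt] using hbb' b hb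
  obtain ⟨k, hkK, hk⟩ := exists_mem_uniformPolynomials_inv_sub hK hb
  obtain ⟨w, hwK, hw⟩ := exists_mem_sq_eq_one_add (Subalgebra.isClosed_topologicalClosure _)
    (Subalgebra.smul_mem _ hkK (b - b')) fun z => by
      rw [ContinuousMap.smul_apply, smul_eq_mul, hk, norm_mul, norm_inv, norm_sub_rev,
        ← div_eq_mul_inv]
      exact (div_lt_one ((norm_nonneg _).trans_lt (hbb' z z.2))).2 (hbb' z z.2)
  have hw2 (z : K) : w z ^ 2 = (z - b') / (z - b) := by
    have : (z : ℂ) - b ≠ 0 := sub_ne_zero.2 (ne_of_mem_of_not_mem z.2 hb)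
    rw [(hw z).1, ContinuousMap.smul_apply, smul_eq_mul, hk]
    field_simp
    ring
  refine ⟨v * w, mul_mem hvK hwK, fun z => ⟨?_, fun hz => ?_⟩⟩
  · rw [ContinuousMap.mul_apply, mul_pow, (hv z).1, hw2, mul_comm]
    exact div_mul_div_cancel₀ (sub_ne_zero.2 (ne_of_mem_of_not_mem z.2 hb))
  · refine re_mul_pos_of_re_sq_pos ((hv z).2 hz) ?_ (hw z).2 ?_
    · rw [(hv z).1]
      exact re_div_sub_pos (hbr.trans_lt hz)
    · rw [hw2]
      exact re_div_sub_pos (hbb' z z.2)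

theorem exists_pos_forall_le_norm_sub {E : Type*} [SeminormedAddCommGroup E] {s : Set E}
    (hs : IsClosed s) {b : E} (hb : b ∉ s) : ∃ δ > 0, ∀ z ∈ s, δ ≤ ‖z - b‖ := by
  obtain ⟨δ, hδ, h⟩ := Metric.isOpen_iff.1 hs.isOpen_compl b hb
  exact ⟨δ, hδ, fun z hz => le_of_not_gt fun hlt => h (mem_ball_iff_norm.2 hlt) hz⟩

/- The points `b` of `Kᶜ ∩ ball a r` with a branch form a relatively open and closed subset of `Kᶜ`
unless a branch reaches the circle, and `Kᶜ` is connected and unbounded. -/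
theorem exists_hasSqrtBranch_norm_sub_eq (hK : IsPreconnected Kᶜ) (ha : a ∉ K) (hr : 0 < r) :
    ∃ b, ‖b - a‖ = r ∧ HasSqrtBranch K a r b := by
  by_contra! hno
  have hKc : IsCompact K := isCompact_iff_compactSpace.2 inferInstance
  let A : Set ℂ := {b | b ∉ K ∧ ‖b - a‖ < r ∧ HasSqrtBranch K a r b}
  have hAo : IsOpen A := by
    refine Metric.isOpen_iff.2 fun b ⟨hbK, hbr, hb⟩ => ?_
    obtain ⟨δ, hδ, hδK⟩ := exists_pos_forall_le_norm_sub hKc.isClosed hbK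
    refine ⟨min δ (r - ‖b - a‖), lt_min hδ (sub_pos.2 hbr), fun b' hb' => ?_⟩
    have hlt : ‖b' - b‖ < δ ∧ ‖b' - b‖ < r - ‖b - a‖ := lt_min_iff.1 (mem_ball_iff_norm.1 hb')
    refine ⟨fun hK' => (hδK b' hK').not_gt hlt.1, ?_,
      hb.of_forall_norm_sub_lt hK hbr.le fun z hz => hlt.1.trans_le (hδK z hz)⟩
    linarith [norm_sub_le_norm_sub_add_norm_sub b' b a]
  have hAcl : closure A ∩ Kᶜ ⊆ A := by
    rintro b' ⟨hcl, hbK'⟩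
    obtain ⟨δ, hδ, hδK⟩ := exists_pos_forall_le_norm_sub hKc.isClosed hbK'
    obtain ⟨b, ⟨-, hbr, hb⟩, hbb'⟩ := Metric.mem_closure_iff.1 hcl (δ / 2) (half_pos hδ)
    have hbranch : HasSqrtBranch K a r b' := by
      refine hb.of_forall_norm_sub_lt hK hbr.le fun z hz => ?_
      rw [dist_eq_norm] at hbb'
      linarith [hδK z hz, norm_sub_le_norm_sub_add_norm_sub z b b', norm_sub_rev b b']
    have hle : ‖b' - a‖ ≤ r := mem_closedBall_iff_norm.1 <|
      closure_minimal (fun x hx => mem_closedBall_iff_norm.2 hx.2.1.le) isClosed_closedBall hcl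
    exact ⟨hbK', hle.lt_of_ne fun heq => hno b' heq hbranch, hbranch⟩
  have hsub : Kᶜ ⊆ A := hK.subset_of_closure_inter_subset hAo
    ⟨a, ha, ha, by simpa using hr, hasSqrtBranch_self ha⟩ hAcl
  have hbdd : Bornology.IsBounded (K ∪ ball a r) := hKc.isBounded.union isBounded_ball
  refine NormedSpace.unbounded_univ ℝ ℂ (hbdd.subset fun b _ => ?_)
  exact or_iff_not_imp_left.2 fun hb => mem_ball_iff_norm.2 (hsub hb).2.1

end SqrtBranch

section LocalApproximation

theorem norm_one_add_sq_le {v : ℂ} (hv : 0 ≤ v.re) : ‖1 + v ^ 2‖ ≤ ‖1 + v‖ ^ 2 := by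
  calc ‖1 + v ^ 2‖ ≤ 1 + ‖v‖ ^ 2 := by grw [norm_add_le, norm_one, norm_pow]
    _ ≤ ‖1 + v‖ ^ 2 := by
      rw [Complex.sq_norm, Complex.sq_norm, Complex.normSq_apply, Complex.normSq_apply]
      simp only [Complex.add_re, Complex.add_im, Complex.one_re, Complex.one_im]
      nlinarith

/- The two solutions `φ, ψ = x * (1 ∓ v) ^ 2 / 2` of `φ * ψ = d ^ 2`, `φ + ψ = 2 * (x - d)` are the
inverse Joukowski maps of a slit with midpoint `x - d = 0`; the left-hand sides below are `2 / ψ`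
and its distance to `1 / (x - d)`. -/
theorem norm_mul_one_sub_sq_div_sq_le {x v d : ℂ} (hd : x * (1 - v ^ 2) = 2 * d) (hd0 : d ≠ 0)
    (hv : 0 ≤ v.re) (hs : x - d ≠ 0) :
    ‖x * (1 - v) ^ 2 / d ^ 2‖ ≤ 2 / ‖x - d‖ ∧
      ‖x * (1 - v) ^ 2 / d ^ 2 - (x - d)⁻¹‖ ≤ ‖d‖ ^ 2 / ‖x - d‖ ^ 3 := by
  set s := x - d with hs_def
  set ψ := x * (1 + v) ^ 2 / 2 with hψ_def
  have hsv : s = x * (1 + v ^ 2) / 2 := by linear_combination hs_def + hd / 2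
  have hsψ : ‖s‖ ≤ ‖ψ‖ := by
    rw [hsv, hψ_def]
    simp only [norm_div, norm_mul, norm_pow]
    gcongr
    exact norm_one_add_sq_le hv
  have hs' : 0 < ‖s‖ := norm_pos_iff.2 hs
  have hψ : ψ ≠ 0 := norm_pos_iff.1 (hs'.trans_le hsψ)
  have hφψ : x * (1 - v) ^ 2 / 2 * ψ = d ^ 2 := by
    rw [hψ_def]
    linear_combination (x * (1 - v ^ 2) + 2 * d) / 4 * hd
  have hg : x * (1 - v) ^ 2 / d ^ 2 = 2 / ψ := by
    rw [div_eq_div_iff (pow_ne_zero 2 hd0) hψ]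
    linear_combination 2 * hφψ
  have hsub : 2 / ψ - s⁻¹ = d ^ 2 / (ψ ^ 2 * s) := by
    rw [← hφψ]
    field_simp
    rw [hsv, hψ_def]
    ring
  rw [hg]
  constructor
  · rw [norm_div, Complex.norm_ofNat]
    gcongr
  · rw [hsub, norm_div, norm_mul, norm_pow, norm_pow, pow_succ ‖s‖ 2]
    gcongr

theorem norm_mul_one_sub_sq_le (x v : ℂ) : ‖x * (1 - v) ^ 2‖ ≤ 2 * (‖x‖ + ‖x * v ^ 2‖) := by
  have : ‖1 - v‖ ≤ 1 + ‖v‖ := by simpa using norm_sub_le 1 v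
  simp only [norm_mul, norm_pow]
  calc ‖x‖ * ‖1 - v‖ ^ 2 ≤ ‖x‖ * (2 * (1 + ‖v‖ ^ 2)) := by
        gcongr
        nlinarith [norm_nonneg (1 - v), sq_nonneg (1 - ‖v‖)]
    _ = 2 * (‖x‖ + ‖x‖ * ‖v‖ ^ 2) := by ring

variable {r : ℝ}

theorem norm_mul_one_sub_sq_div_sq_le_div {x v d : ℂ} (hd : x * (1 - v ^ 2) = 2 * d) (hr : 0 < r)
    (hdr : ‖d‖ = r / 2) (hv : r < ‖x‖ → 0 ≤ v.re) : ‖x * (1 - v) ^ 2 / d ^ 2‖ ≤ 24 / r := by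
  rcases lt_or_ge r ‖x‖ with hx | hx
  · have hs : r / 2 < ‖x - d‖ := by linarith [norm_sub_norm_le x d]
    have hd0 : d ≠ 0 := norm_pos_iff.1 (hdr ▸ half_pos hr)
    calc ‖x * (1 - v) ^ 2 / d ^ 2‖ ≤ 2 / ‖x - d‖ :=
          (norm_mul_one_sub_sq_div_sq_le hd hd0 (hv hx)
            (norm_pos_iff.1 ((half_pos hr).trans hs))).1
      _ ≤ 2 / (r / 2) := by grw [hs]
      _ ≤ 24 / r := by
        rw [div_le_div_iff₀ (half_pos hr) hr]
        linarith
  · have hxv : ‖x * v ^ 2‖ ≤ r + r := by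
      have : x * v ^ 2 = x - 2 * d := by linear_combination -hd
      grw [this, norm_sub_le, norm_mul, hdr, hx, Complex.norm_ofNat, mul_div_cancel₀ r two_ne_zero]
    calc ‖x * (1 - v) ^ 2 / d ^ 2‖ ≤ 2 * (r + (r + r)) / (r / 2) ^ 2 := by
          grw [norm_div, norm_mul_one_sub_sq_le, hxv, norm_pow, hdr, hx]
      _ = 24 / r := by
        field_simp
        norm_num

theorem exists_mem_uniformPolynomials_approx_inv_sub {K : Set ℂ} [CompactSpace K]
    (hK : IsPreconnected Kᶜ) {a : ℂ} (ha : a ∉ K) (hr : 0 < r) :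
    ∃ c, ‖c - a‖ = r / 2 ∧ ∃ g ∈ uniformPolynomials K, ∀ z : K, ‖g z‖ ≤ 24 / r ∧ (r < ‖z - a‖ →
      ‖g z‖ ≤ 2 / ‖z - c‖ ∧ ‖g z - (z - c : ℂ)⁻¹‖ ≤ (r / 2) ^ 2 / ‖z - c‖ ^ 3) := by
  obtain ⟨b, hb, v, hvK, hv⟩ := exists_hasSqrtBranch_norm_sub_eq hK ha hr
  set d := (b - a) / 2 with hd
  have hdr : ‖d‖ = r / 2 := by rw [hd, norm_div, hb, Complex.norm_ofNat]
  have hd0 : d ≠ 0 := norm_pos_iff.1 (hdr ▸ half_pos hr)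
  let g : C(K, ℂ) := (d ^ 2)⁻¹ • ((Polynomial.X - Polynomial.C a).toContinuousMapOn K * (1 - v) ^ 2)
  have hgK : g ∈ uniformPolynomials K := Subalgebra.smul_mem _ (mul_mem
    (toContinuousMapOn_mem_uniformPolynomials _) (pow_mem (sub_mem (one_mem _) hvK) 2)) _
  have hg (z : K) : g z = (z - a) * (1 - v z) ^ 2 / d ^ 2 := by
    simp [g, div_eq_inv_mul]
  have hvd (z : K) : (z - a) * (1 - v z ^ 2) = 2 * d := by
    have hza : (z : ℂ) - a ≠ 0 := sub_ne_zero.2 (ne_of_mem_of_not_mem z.2 ha)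
    rw [(hv z).1, hd]
    field_simp
    ring
  refine ⟨a + d, by rw [add_sub_cancel_left, hdr], g, hgK, fun z => ⟨?_, fun hz => ?_⟩⟩
  · rw [hg]
    exact norm_mul_one_sub_sq_div_sq_le_div (hvd z) hr hdr fun hz => ((hv z).2 hz).le
  · have hs : (z - a - d : ℂ) ≠ 0 := norm_pos_iff.1 (by linarith [norm_sub_norm_le (z - a : ℂ) d])
    rw [hg, ← hdr, ← sub_sub]
    exact norm_mul_one_sub_sq_div_sq_le (hvd z) hd0 ((hv z).2 hz).le hs

/-- The error kernel for approximating the Cauchy kernel at scale `r`: comparable to `1 / ‖w‖` for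
`‖w‖ ≤ r` and to `r ^ 2 / ‖w‖ ^ 3` beyond. -/
noncomputable def errorKernel (r : ℝ) (w : ℂ) : ℝ :=
  r ^ 2 / (‖w‖ * (r ^ 2 + ‖w‖ ^ 2))

theorem one_div_le_errorKernel {t : ℂ} (ht : t ≠ 0) (htr : ‖t‖ < 5 * r) :
    1 / (26 * ‖t‖) ≤ errorKernel r t := by
  have ht0 : 0 < ‖t‖ := norm_pos_iff.2 ht
  have hr : 0 < r := by linarith
  rw [errorKernel, div_le_div_iff₀ (by positivity) (by positivity)]
  have : ‖t‖ ^ 2 ≤ (5 * r) ^ 2 := by gcongr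
  nlinarith

theorem sq_div_le_errorKernel {t : ℂ} (hr : 0 < r) (hrt : r ≤ ‖t‖) :
    r ^ 2 / (2 * ‖t‖ ^ 3) ≤ errorKernel r t := by
  have ht : 0 < ‖t‖ := hr.trans_le hrt
  have hle : r ^ 2 + ‖t‖ ^ 2 ≤ 2 * ‖t‖ ^ 2 := by
    have : r ^ 2 ≤ ‖t‖ ^ 2 := by gcongr
    linarith
  refine div_le_div_of_nonneg_left (sq_nonneg r) (by positivity) ?_
  calc ‖t‖ * (r ^ 2 + ‖t‖ ^ 2) ≤ ‖t‖ * (2 * ‖t‖ ^ 2) := by gcongr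
    _ = 2 * ‖t‖ ^ 3 := by ring

theorem norm_add_mul_sq_sub_inv_le_of_lt {g u t : ℂ} (hg : ‖g‖ ≤ 24 / r) (hu : ‖u‖ ≤ 5 / 2 * r)
    (ht : t ≠ 0) (htr : ‖t‖ < 5 * r) :
    ‖g + u * g ^ 2 - t⁻¹‖ ≤ 2 * 10 ^ 5 * errorKernel r t := by
  have ht0 : 0 < ‖t‖ := norm_pos_iff.2 ht
  have hr : 0 < r := by linarith
  have hrt : 1 / r ≤ 5 / ‖t‖ := by
    rw [div_le_div_iff₀ hr ht0]
    linarith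
  calc ‖g + u * g ^ 2 - t⁻¹‖ ≤ ‖g‖ + ‖u‖ * ‖g‖ ^ 2 + ‖t‖⁻¹ := by
        grw [norm_sub_le, norm_add_le, norm_mul, norm_pow, norm_inv]
    _ ≤ 24 / r + 5 / 2 * r * (24 / r) ^ 2 + ‖t‖⁻¹ := by gcongr
    _ = 1464 * (1 / r) + ‖t‖⁻¹ := by
        field_simp
        ring
    _ ≤ 1464 * (5 / ‖t‖) + ‖t‖⁻¹ := by gcongr
    _ = 7321 * 26 * (1 / (26 * ‖t‖)) := by
        field_simp
        norm_num
    _ ≤ 2 * 10 ^ 5 * errorKernel r t := by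
        exact mul_le_mul (by norm_num) (one_div_le_errorKernel ht htr) (by positivity)
          (by norm_num)

theorem norm_add_mul_sq_sub_inv_le_add {g s u : ℂ} (hs : s ≠ 0) (hsu : s - u ≠ 0) :
    ‖g + u * g ^ 2 - (s - u)⁻¹‖ ≤ ‖g - s⁻¹‖ + ‖u‖ * (‖g - s⁻¹‖ * (‖g‖ + ‖s⁻¹‖)) +
      ‖u‖ ^ 2 * (‖s⁻¹‖ ^ 2 * ‖s - u‖⁻¹) := by
  have hexpand : g + u * g ^ 2 - (s - u)⁻¹ =
      (g - s⁻¹) + u * ((g - s⁻¹) * (g + s⁻¹)) - u ^ 2 * (s⁻¹ ^ 2 * (s - u)⁻¹) := by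
    field_simp
    ring
  rw [hexpand]
  grw [norm_sub_le, norm_add_le, norm_mul, norm_mul, norm_mul, norm_mul, norm_add_le g]
  simp only [norm_pow, norm_inv, le_refl]

theorem norm_add_mul_sq_sub_inv_le_of_le {g s u : ℂ} (hr : 0 < r) (hu : ‖u‖ ≤ 5 / 2 * r)
    (hsr : 5 * r ≤ ‖s - u‖) (hg : ‖g‖ ≤ 2 / ‖s‖) (hgs : ‖g - s⁻¹‖ ≤ (r / 2) ^ 2 / ‖s‖ ^ 3) :
    ‖g + u * g ^ 2 - (s - u)⁻¹‖ ≤ 2 * 10 ^ 5 * errorKernel r (s - u) := by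
  set t := s - u
  have ht : 0 < ‖t‖ := by linarith
  have hst : ‖t‖ / 2 ≤ ‖s‖ := by linarith [norm_sub_le s u]
  have hs : s ≠ 0 := norm_pos_iff.1 ((half_pos ht).trans_le hst)
  have hg' : ‖g‖ ≤ 4 / ‖t‖ :=
    calc ‖g‖ ≤ 2 / (‖t‖ / 2) := by grw [hg, hst]
      _ = 4 / ‖t‖ := by ring
  have hs' : ‖s⁻¹‖ ≤ 2 / ‖t‖ := by
    grw [norm_inv, ← hst, inv_div]
  have hgs' : ‖g - s⁻¹‖ ≤ 2 * r ^ 2 / ‖t‖ ^ 3 :=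
    calc ‖g - s⁻¹‖ ≤ (r / 2) ^ 2 / (‖t‖ / 2) ^ 3 := by grw [hgs, hst]
      _ = 2 * r ^ 2 / ‖t‖ ^ 3 := by ring
  have hrt : r / ‖t‖ ≤ 1 / 5 := by
    rw [div_le_div_iff₀ ht (by norm_num)]
    linarith
  calc ‖g + u * g ^ 2 - t⁻¹‖
      ≤ ‖g - s⁻¹‖ + ‖u‖ * (‖g - s⁻¹‖ * (‖g‖ + ‖s⁻¹‖)) + ‖u‖ ^ 2 * (‖s⁻¹‖ ^ 2 * ‖t‖⁻¹) :=
        norm_add_mul_sq_sub_inv_le_add hs (norm_pos_iff.1 ht)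
    _ ≤ 2 * r ^ 2 / ‖t‖ ^ 3 + 5 / 2 * r * (2 * r ^ 2 / ‖t‖ ^ 3 * (4 / ‖t‖ + 2 / ‖t‖)) +
          (5 / 2 * r) ^ 2 * ((2 / ‖t‖) ^ 2 * ‖t‖⁻¹) := by gcongr
    _ = 27 * r ^ 2 / ‖t‖ ^ 3 + 30 * r ^ 2 / ‖t‖ ^ 3 * (r / ‖t‖) := by
        field_simp
        ring
    _ ≤ 27 * r ^ 2 / ‖t‖ ^ 3 + 30 * r ^ 2 / ‖t‖ ^ 3 * (1 / 5) := by
        gcongr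
    _ = 66 * (r ^ 2 / (2 * ‖t‖ ^ 3)) := by
        field_simp
        norm_num
    _ ≤ 2 * 10 ^ 5 * errorKernel r t := by
        exact mul_le_mul (by norm_num) (sq_div_le_errorKernel hr (by linarith)) (by positivity)
          (by norm_num)

theorem exists_mem_uniformPolynomials_approx_cauchyKernel {K : Set ℂ} [CompactSpace K]
    (hK : IsPreconnected Kᶜ) {a : ℂ} (ha : a ∉ K) (hr : 0 < r) :
    ∃ c, ∃ g ∈ uniformPolynomials K, ∀ z : K, ∀ η ∈ ball a (2 * r), (z : ℂ) ≠ η →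
      ‖g z + (η - c) * g z ^ 2 - (z - η)⁻¹‖ ≤ 2 * 10 ^ 5 * errorKernel r (z - η) := by
  obtain ⟨c, hc, g, hgK, hg⟩ := exists_mem_uniformPolynomials_approx_inv_sub hK ha hr
  refine ⟨c, g, hgK, fun z η hη hzη => ?_⟩
  rw [mem_ball_iff_norm] at hη
  have hηc : ‖η - c‖ ≤ 5 / 2 * r := by
    linarith [norm_sub_le_norm_sub_add_norm_sub η a c, norm_sub_rev a c]
  rcases lt_or_ge ‖(z : ℂ) - η‖ (5 * r) with hz | hz
  · exact norm_add_mul_sq_sub_inv_le_of_lt (hg z).1 hηc (sub_ne_zero.2 hzη) hz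
  · have hza : r < ‖(z : ℂ) - a‖ := by
      linarith [norm_sub_le_norm_sub_add_norm_sub (z : ℂ) a η, norm_sub_rev a η]
    rw [← sub_sub_sub_cancel_right (z : ℂ) η c] at hz ⊢
    exact norm_add_mul_sq_sub_inv_le_of_le hr hηc hz ((hg z).2 hza).1 ((hg z).2 hza).2

end LocalApproximation

section ErrorKernel

variable {r : ℝ}

theorem errorKernel_nonneg (r : ℝ) (w : ℂ) : 0 ≤ errorKernel r w := by
  rw [errorKernel]
  positivity

theorem errorKernel_eq_inv_mul (hr : 0 < r) (w : ℂ) :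
    errorKernel r w = r⁻¹ * errorKernel 1 (r⁻¹ • w) := by
  have hnorm : ‖r⁻¹ • w‖ = r⁻¹ * ‖w‖ := norm_smul_of_nonneg (inv_nonneg.2 hr.le) w
  rw [errorKernel, errorKernel, hnorm]
  field_simp

theorem integrable_errorKernel_one : Integrable (errorKernel 1) := by
  refine (integrable_fun_norm_addHaar (f := fun t : ℝ => 1 ^ 2 / (t * (1 ^ 2 + t ^ 2)))
    volume).2 ?_
  rw [Complex.finrank_real_complex]
  refine integrable_inv_one_add_sq.integrableOn.congr_fun (fun t ht => ?_) measurableSet_Ioi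
  have : t ≠ 0 := (Set.mem_Ioi.1 ht).ne'
  simp only [smul_eq_mul, Nat.add_one_sub_one, pow_one]
  field_simp

theorem integrable_errorKernel (hr : 0 < r) : Integrable (errorKernel r) := by
  rw [funext (errorKernel_eq_inv_mul hr)]
  exact (integrable_errorKernel_one.comp_smul (inv_ne_zero hr.ne')).const_mul _

theorem integral_errorKernel (hr : 0 < r) :
    ∫ w, errorKernel r w = r * ∫ w, errorKernel 1 w := by
  simp_rw [errorKernel_eq_inv_mul hr, integral_const_mul,
    Measure.integral_comp_inv_smul_of_nonneg volume (errorKernel 1) hr.le,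
    Complex.finrank_real_complex, smul_eq_mul]
  field_simp

end ErrorKernel

section CauchyPotential

theorem locallyIntegrable_inv : LocallyIntegrable (fun w : ℂ => w⁻¹) :=
  locallyIntegrable_of_norm_le_rpow (α := 1) (C := 1) (by simp) (by simp)
    (.of_forall fun w => by rw [one_mul, Real.rpow_neg_one, norm_inv])
    measurable_inv.aestronglyMeasurable

theorem integrable_mul_inv_sub {H : ℂ → ℂ} (hH : Continuous H) (hHs : HasCompactSupport H) (z : ℂ) :
    Integrable fun η => H η * (z - η)⁻¹ :=
  hHs.convolutionExists_left (ContinuousLinearMap.mul ℝ ℂ) hH locallyIntegrable_inv z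

/-- On every measurable part of `E`, the Cauchy potential of the density `H` is approximated on `K`
by an element of `P(K)`, with an error controlled by the kernel `κ`. Passing to parts makes the
notion compatible with unions that are not disjoint. -/
def CauchyApproximableOn (K : Set ℂ) [CompactSpace K] (H : ℂ → ℂ) (κ : ℂ → ℝ) (E : Set ℂ) : Prop :=
  ∀ S ⊆ E, MeasurableSet S → ∃ F ∈ uniformPolynomials K, ∀ z : K,
    ‖F z - ∫ η in S, H η * (z - η)⁻¹‖ ≤ ∫ η in S, κ (z - η)

variable {K : Set ℂ} [CompactSpace K] {H : ℂ → ℂ} {κ : ℂ → ℝ} {E T : Set ℂ} {B r : ℝ}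

theorem cauchyApproximableOn_of_eqOn_zero (hκ : ∀ w, 0 ≤ κ w) (hHE : ∀ η ∈ E, H η = 0) :
    CauchyApproximableOn K H κ E := by
  refine fun S hSE hS => ⟨0, zero_mem _, fun z => ?_⟩
  rw [setIntegral_eq_zero_of_forall_eq_zero fun η hη => by rw [hHE η (hSE hη), zero_mul]]
  simpa using setIntegral_nonneg hS fun η _ => hκ (z - η)

theorem CauchyApproximableOn.union (hH : Continuous H) (hHs : HasCompactSupport H)
    (hκ : Integrable κ) (hEm : MeasurableSet E) (hE : CauchyApproximableOn K H κ E)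
    (hT : CauchyApproximableOn K H κ T) : CauchyApproximableOn K H κ (E ∪ T) := by
  intro S hS hSm
  obtain ⟨F₁, hF₁K, hF₁⟩ := hE (S ∩ E) Set.inter_subset_right (hSm.inter hEm)
  obtain ⟨F₂, hF₂K, hF₂⟩ := hT (S \ E) (Set.sdiff_subset_iff.2 hS) (hSm.diff hEm)
  refine ⟨F₁ + F₂, add_mem hF₁K hF₂K, fun z => ?_⟩
  rw [← integral_inter_add_sdiff hEm (integrable_mul_inv_sub hH hHs z).integrableOn,
    ← integral_inter_add_sdiff hEm (hκ.comp_sub_left (z : ℂ)).integrableOn,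
    ContinuousMap.add_apply, add_sub_add_comm]
  exact norm_add_le_of_le (hF₁ z) (hF₂ z)

theorem exists_measurableSet_superset_cauchyApproximableOn (hH : Continuous H)
    (hHs : HasCompactSupport H) (hκ : Integrable κ) (hκ0 : ∀ w, 0 ≤ κ w) (hE : IsCompact E)
    (h : ∀ η ∈ E, ∃ U ∈ 𝓝 η, MeasurableSet U ∧ CauchyApproximableOn K H κ U) :
    ∃ T, E ⊆ T ∧ MeasurableSet T ∧ CauchyApproximableOn K H κ T := by
  refine hE.induction_on (p := fun s => ∃ T, s ⊆ T ∧ MeasurableSet T ∧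
    CauchyApproximableOn K H κ T) ?_ ?_ ?_ fun η hη => ?_
  · exact ⟨∅, subset_rfl, .empty, cauchyApproximableOn_of_eqOn_zero hκ0 fun _ => False.elim⟩
  · exact fun s t hst ⟨T, htT, hT⟩ => ⟨T, hst.trans htT, hT⟩
  · exact fun s t ⟨S, hsS, hSm, hS⟩ ⟨T, htT, hTm, hT⟩ =>
      ⟨S ∪ T, Set.union_subset_union hsS htT, hSm.union hTm, hS.union hH hHs hκ hSm hT⟩
  · obtain ⟨U, hηU, hU⟩ := h η hη
    exact ⟨U, mem_nhdsWithin_of_mem_nhds hηU, U, subset_rfl, hU⟩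

theorem cauchyApproximableOn_ball (hK : IsPreconnected Kᶜ) {a : ℂ} (ha : a ∉ K) (hr : 0 < r)
    (hH : Continuous H) (hHs : HasCompactSupport H) (hHB : ∀ η, ‖H η‖ ≤ B) :
    CauchyApproximableOn K H (fun w => B * (2 * 10 ^ 5 * errorKernel r w)) (ball a (2 * r)) := by
  obtain ⟨c, g, hgK, hg⟩ := exists_mem_uniformPolynomials_approx_cauchyKernel hK ha hr
  refine fun S hS hSm => ⟨(∫ η in S, H η) • g + (∫ η in S, H η * (η - c)) • g ^ 2,
    add_mem (Subalgebra.smul_mem _ hgK _) (Subalgebra.smul_mem _ (pow_mem hgK 2) _), fun z => ?_⟩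
  have hint₀ : IntegrableOn (fun η => H η * g z) S :=
    ((hH.integrable_of_hasCompactSupport hHs).mul_const _).integrableOn
  have hint₁ : IntegrableOn (fun η => H η * (η - c) * g z ^ 2) S :=
    (((hH.mul (by fun_prop)).integrable_of_hasCompactSupport
      hHs.mul_right).mul_const _).integrableOn
  have hint₀₁ : IntegrableOn (fun η => H η * g z + H η * (η - c) * g z ^ 2) S := hint₀.add hint₁
  have hint : IntegrableOn (fun η => H η * (z - η)⁻¹) S :=
    (integrable_mul_inv_sub hH hHs z).integrableOn
  have hdiff : (∫ η in S, H η) * g z + (∫ η in S, H η * (η - c)) * g z ^ 2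
        - ∫ η in S, H η * (z - η)⁻¹
      = ∫ η in S, H η * (g z + (η - c) * g z ^ 2 - (z - η)⁻¹) := by
    rw [← integral_mul_const, ← integral_mul_const, ← integral_add hint₀ hint₁,
      ← integral_sub hint₀₁ hint]
    congr with η
    ring
  have hne : ∀ᵐ η : ℂ, η ≠ z := by simp [ae_iff]
  simp only [ContinuousMap.add_apply, ContinuousMap.smul_apply, ContinuousMap.pow_apply,
    smul_eq_mul]
  rw [hdiff]
  refine norm_integral_le_of_norm_le (((integrable_errorKernel hr).const_mul _).const_mul _
    |>.comp_sub_left (z : ℂ)).integrableOn ?_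
  filter_upwards [ae_restrict_mem hSm, ae_restrict_of_ae hne] with η hη hzη
  rw [norm_mul]
  exact mul_le_mul (hHB η) (hg z η (hS hη) hzη.symm) (norm_nonneg _)
    ((norm_nonneg _).trans (hHB η))

theorem exists_mem_uniformPolynomials_norm_sub_integral_le (hK : IsPreconnected Kᶜ) (hr : 0 < r)
    (hH : Continuous H) (hHs : HasCompactSupport H) (hHB : ∀ η, ‖H η‖ ≤ B)
    (hHK : ∀ η, closedBall η r ⊆ K → H η = 0) :
    ∃ F ∈ uniformPolynomials K, ∀ z : K,
      ‖F z - ∫ η, H η * (z - η)⁻¹‖ ≤ B * (2 * 10 ^ 5 * (r * ∫ w, errorKernel 1 w)) := by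
  let κ : ℂ → ℝ := fun w => B * (2 * 10 ^ 5 * errorKernel r w)
  have hκ : Integrable κ := ((integrable_errorKernel hr).const_mul _).const_mul _
  have hκ0 (w : ℂ) : 0 ≤ κ w :=
    mul_nonneg ((norm_nonneg _).trans (hHB 0)) (mul_nonneg (by norm_num) (errorKernel_nonneg r w))
  have hnear (η : ℂ) (hη : η ∈ tsupport H) :
      ∃ U ∈ 𝓝 η, MeasurableSet U ∧ CauchyApproximableOn K H κ U := by
    obtain ⟨η', hη', hηη'⟩ := Metric.mem_closure_iff.1 hη r hr
    obtain ⟨a, haη', haK⟩ := Set.not_subset.1 (mt (hHK η') hη')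
    have hηa : η ∈ ball a (2 * r) := by
      rw [mem_ball]
      linarith [dist_triangle_right η a η', mem_closedBall.1 haη']
    exact ⟨_, isOpen_ball.mem_nhds hηa, measurableSet_ball,
      cauchyApproximableOn_ball hK haK hr hH hHs hHB⟩
  obtain ⟨T, hT, hTm, hTK⟩ :=
    exists_measurableSet_superset_cauchyApproximableOn hH hHs hκ hκ0 hHs.isCompact hnear
  have huniv : CauchyApproximableOn K H κ (T ∪ (tsupport H)ᶜ) :=
    hTK.union hH hHs hκ hTm
      (cauchyApproximableOn_of_eqOn_zero hκ0 fun η => image_eq_zero_of_notMem_tsupport)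
  obtain ⟨F, hFK, hF⟩ := huniv Set.univ
    (fun η _ => (em (η ∈ tsupport H)).imp (@hT η) id) .univ
  refine ⟨F, hFK, fun z => ?_⟩
  have := hF z
  rw [setIntegral_univ, setIntegral_univ, integral_sub_left_eq_self κ volume (z : ℂ)] at this
  simpa only [κ, integral_const_mul, integral_errorKernel hr] using this

end CauchyPotential

section CircleIntegral

variable {f : ℂ → ℂ} {r ω : ℝ}

theorem continuous_circleIntegral_center (hf : Continuous f) (r : ℝ) :
    Continuous fun η => ∮ u in C(η, r), f u := by
  refine intervalIntegral.continuous_parametric_intervalIntegral_of_continuous' ?_ _ _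
  simp only [Function.uncurry_def, deriv_circleMap, circleMap]
  fun_prop

theorem hasCompactSupport_circleIntegral_center (hfs : HasCompactSupport f) (hr : 0 ≤ r) :
    HasCompactSupport fun η => ∮ u in C(η, r), f u := by
  refine .intro (hfs.isCompact.cthickening (r := r)) fun η hη => ?_
  have hzero : Set.EqOn f 0 (sphere η r) := fun u hu =>
    image_eq_zero_of_notMem_tsupport fun hu' =>
      hη (closedBall_subset_cthickening hu' r (mem_closedBall'.2 hu.le))
  rw [circleIntegral.integral_congr hr hzero]
  simp [circleIntegral]

theorem norm_circleIntegral_le_of_forall_norm_sub_le (hf : Continuous f) (hr : 0 ≤ r)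
    (hω : ∀ x y, ‖x - y‖ ≤ r → ‖f x - f y‖ ≤ ω) (η : ℂ) :
    ‖∮ u in C(η, r), f u‖ ≤ 2 * Real.pi * r * ω := by
  have hconst : (∮ _ in C(η, r), f η) = 0 := diffContOnCl_const.circleIntegral_eq_zero hr
  rw [← sub_zero (∮ u in C(η, r), f u), ← hconst, ← circleIntegral.integral_sub
    (hf.continuousOn.circleIntegrable hr) (circleIntegrable_const _ _ _)]
  exact circleIntegral.norm_integral_le_of_norm_le_const hr fun u hu =>
    hω u η (mem_sphere_iff_norm.1 hu).le

theorem integrable_prod_mul_inv_sub {γ φ : ℝ → ℂ} (hf : Continuous f) (hfs : HasCompactSupport f)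
    (hγ : Continuous γ) (hφ : Continuous φ) (a b : ℝ) :
    Integrable (fun p : ℝ × ℂ => φ p.1 * (f p.2 * (γ p.1 - p.2)⁻¹))
      ((volume.restrict (Set.Icc a b)).prod volume) := by
  have hmeas : Measurable fun p : ℝ × ℂ => φ p.1 * (f p.2 * (γ p.1 - p.2)⁻¹) := by
    have := hf.measurable
    have := hγ.measurable
    have := hφ.measurable
    fun_prop
  have hconv : Continuous fun z => ∫ w, ‖f w‖ * ‖(z - w)⁻¹‖ :=
    hfs.norm.continuous_convolution_left (ContinuousLinearMap.mul ℝ ℝ) hf.norm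
      fun w => (locallyIntegrable_inv w).norm
  refine (integrable_prod_iff hmeas.aestronglyMeasurable).2
    ⟨.of_forall fun t => (integrable_mul_inv_sub hf hfs (γ t)).const_mul (φ t), ?_⟩
  simp only [norm_mul, integral_const_mul]
  exact (hφ.norm.mul (hconv.comp hγ)).integrableOn_Icc

theorem integral_circleIntegral_mul_inv_sub (hf : Continuous f) (hfs : HasCompactSupport f)
    (r : ℝ) (z : ℂ) : ∫ η, (∮ u in C(η, r), f u) * (z - η)⁻¹ =
      ∫ w, f w * ∮ u in C(z, r), (u - w)⁻¹ := by
  let μ : Measure ℝ := volume.restrict (Set.Icc 0 (2 * Real.pi))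
  let G : ℝ → ℂ → ℂ := fun θ w => deriv (circleMap z r) θ * (f w * (circleMap z r θ - w)⁻¹)
  have hG : Integrable (Function.uncurry G) (μ.prod volume) :=
    integrable_prod_mul_inv_sub hf hfs (continuous_circleMap z r)
      (by rw [funext (deriv_circleMap z r)]; fun_prop) _ _
  have hshift : MeasurePreserving (fun p : ℝ × ℂ => (p.1, p.2 + circleMap 0 r p.1))
      (μ.prod volume) (μ.prod volume) :=
    MeasurePreserving.skew_product (g := fun θ η => η + circleMap 0 r θ) (.id μ)
      (by fun_prop) (.of_forall fun θ => (measurePreserving_add_right volume _).map_eq)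
  have hG' : Integrable (Function.uncurry fun θ η => G θ (η + circleMap 0 r θ)) (μ.prod volume) :=
    hshift.integrable_comp_of_integrable hG
  calc ∫ η, (∮ u in C(η, r), f u) * (z - η)⁻¹
      = ∫ η, ∫ θ, G θ (η + circleMap 0 r θ) ∂μ := by
        congr with η
        rw [circleIntegral_def_Icc, ← integral_mul_const]
        congr with θ
        simp only [G, deriv_circleMap, circleMap, zero_add, smul_eq_mul,
          add_sub_add_right_eq_sub, mul_assoc]
    _ = ∫ θ, (∫ η, G θ (η + circleMap 0 r θ)) ∂μ := (integral_integral_swap hG').symm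
    _ = ∫ θ, (∫ w, G θ w) ∂μ := by
        congr with θ
        exact integral_add_right_eq_self (G θ) (circleMap 0 r θ)
    _ = ∫ w, ∫ θ, G θ w ∂μ := integral_integral_swap hG
    _ = ∫ w, f w * ∮ u in C(z, r), (u - w)⁻¹ := by
        congr with w
        rw [circleIntegral_def_Icc, ← integral_const_mul]
        congr with θ
        rw [smul_eq_mul, mul_left_comm]

theorem circleIntegral_inv_sub_eq_zero (hr : 0 ≤ r) {z w : ℂ} (hw : w ∉ closedBall z r) :
    ∮ u in C(z, r), (u - w)⁻¹ = 0 := by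
  have hne : ∀ u ∈ closedBall z r, u - w ≠ 0 := fun u hu =>
    sub_ne_zero.2 (ne_of_mem_of_not_mem hu hw)
  have hd : DifferentiableOn ℂ (fun u => (u - w)⁻¹) (closedBall z r) :=
    (differentiableOn_id.sub_const w).inv hne
  exact (hd.mono closure_ball_subset_closedBall).diffContOnCl.circleIntegral_eq_zero hr

theorem integral_circleIntegral_mul_inv_sub_eq_setIntegral (hf : Continuous f)
    (hfs : HasCompactSupport f) (hr : 0 < r) (z : ℂ) :
    ∫ η, (∮ u in C(η, r), f u) * (z - η)⁻¹ =
      2 * Real.pi * Complex.I * ∫ w in ball z r, f w := by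
  rw [integral_circleIntegral_mul_inv_sub hf hfs, ← integral_const_mul,
    ← integral_indicator measurableSet_ball]
  have hsphere : ∀ᵐ w : ℂ, w ∉ sphere z r :=
    measure_eq_zero_iff_ae_notMem.1 (Measure.addHaar_sphere volume z r)
  refine integral_congr_ae ?_
  filter_upwards [hsphere] with w hw
  by_cases hwr : w ∈ ball z r
  · rw [circleIntegral.integral_sub_inv_of_mem_ball hwr, Set.indicator_of_mem hwr, mul_comm]
  · have hwr' : w ∉ closedBall z r := by
      rw [← ball_union_sphere]
      exact not_or.2 ⟨hwr, hw⟩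
    rw [circleIntegral_inv_sub_eq_zero hr.le hwr', Set.indicator_of_notMem hwr, mul_zero]

end CircleIntegral

theorem norm_setIntegral_ball_sub_le {f : ℂ → ℂ} {r ω : ℝ} (hf : Continuous f) (hr : 0 ≤ r)
    (hω : ∀ x y, ‖x - y‖ ≤ r → ‖f x - f y‖ ≤ ω) (z : ℂ) :
    ‖(∫ w in ball z r, f w) - Real.pi * r ^ 2 * f z‖ ≤ Real.pi * r ^ 2 * ω := by
  have hvol : volume.real (ball z r) = Real.pi * r ^ 2 := by
    simp [Measure.real, Complex.volume_ball, hr, mul_comm]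
  have hconst : ∫ _ in ball z r, f z = Real.pi * r ^ 2 * f z := by
    rw [setIntegral_const, hvol, Complex.real_smul]
    push_cast
    rfl
  have hint : IntegrableOn f (ball z r) :=
    (hf.continuousOn.integrableOn_compact (isCompact_closedBall z r)).mono_set
      ball_subset_closedBall
  rw [← hconst, ← integral_sub hint (integrableOn_const measure_ball_lt_top.ne), mul_comm,
    ← hvol]
  exact norm_setIntegral_le_of_norm_le_const measure_ball_lt_top fun w hw =>
    hω w z (mem_ball_iff_norm.1 hw).le

theorem exists_continuous_hasCompactSupport_eqOn {X : Type*} [TopologicalSpace X] [T4Space X]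
    [LocallyCompactSpace X] {K : Set X} (hK : IsCompact K) {f : X → ℂ} (hf : ContinuousOn f K) :
    ∃ F : X → ℂ, Continuous F ∧ HasCompactSupport F ∧ Set.EqOn F f K := by
  obtain ⟨g, hg⟩ := ContinuousMap.exists_restrict_eq hK.isClosed
    (⟨K.domRestrict f, hf.domRestrict⟩ : C(K, ℂ))
  obtain ⟨χ, hχK, -, hχs, -⟩ := exists_continuous_one_zero_of_isCompact hK isClosed_empty
    (Set.disjoint_empty K)
  refine ⟨fun x => χ x • g x, by fun_prop, hχs.smul_right, fun x hx => ?_⟩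
  have hgx : g x = f x := DFunLike.congr_fun hg ⟨x, hx⟩
  simp only [hχK hx, Pi.one_apply, one_smul, hgx]

theorem circleIntegral_eq_zero_of_closedBall_subset {K : Set ℂ} {F : ℂ → ℂ} {r : ℝ}
    (hF : Continuous F) (hFd : DifferentiableOn ℂ F (interior K)) (hr : 0 ≤ r) {η : ℂ}
    (hη : closedBall η r ⊆ K) : ∮ u in C(η, r), F u = 0 := by
  have hball : ball η r ⊆ interior K :=
    interior_maximal (ball_subset_closedBall.trans hη) isOpen_ball
  exact DiffContOnCl.circleIntegral_eq_zero hr ⟨hFd.mono hball, hF.continuousOn⟩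

theorem norm_inv_mul_sub_le {c a x m y : ℂ} {A B : ℝ} (hc : c ≠ 0) (ha : a ≠ 0)
    (hx : ‖x - c * m‖ ≤ A) (hm : ‖m - a * y‖ ≤ B) :
    ‖(c * a)⁻¹ * x - y‖ ≤ (‖c‖ * ‖a‖)⁻¹ * A + ‖a‖⁻¹ * B := by
  have hsplit : (c * a)⁻¹ * x - y = (c * a)⁻¹ * (x - c * m) + a⁻¹ * (m - a * y) := by
    field_simp
    ring
  grw [hsplit, norm_add_le, norm_mul, norm_mul a⁻¹, hx, hm, norm_inv, norm_inv, norm_mul]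

theorem exists_mem_uniformPolynomials_norm_sub_le_of_modulus {K : Set ℂ} [CompactSpace K]
    (hK : IsPreconnected Kᶜ) {F : ℂ → ℂ} (hF : Continuous F) (hFs : HasCompactSupport F)
    (hFd : DifferentiableOn ℂ F (interior K)) {r ω : ℝ} (hr : 0 < r)
    (hω : ∀ x y, ‖x - y‖ ≤ r → ‖F x - F y‖ ≤ ω) :
    ∃ Q ∈ uniformPolynomials K, ∀ z : K,
      ‖Q z - F z‖ ≤ ω * (2 * 10 ^ 5 * (∫ w, errorKernel 1 w) + 1) := by
  set C₀ := ∫ w, errorKernel 1 w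
  have hC₀ : 0 ≤ C₀ := integral_nonneg (errorKernel_nonneg 1)
  have hω₀ : 0 ≤ ω := (norm_nonneg _).trans (hω 0 0 (by simpa using hr.le))
  obtain ⟨G, hG, hGapprox⟩ := exists_mem_uniformPolynomials_norm_sub_integral_le hK hr
    (continuous_circleIntegral_center hF r) (hasCompactSupport_circleIntegral_center hFs hr.le)
    (norm_circleIntegral_le_of_forall_norm_sub_le hF hr.le hω)
    (fun _ => circleIntegral_eq_zero_of_closedBall_subset hF hFd hr.le)
  let c : ℂ := 2 * Real.pi * Complex.I
  let a : ℂ := Real.pi * r ^ 2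
  have hc : ‖c‖ = 2 * Real.pi := by simp [c, Real.pi_pos.le]
  have ha : ‖a‖ = Real.pi * r ^ 2 := by simp [a, Real.pi_pos.le]
  have hc₀ : c ≠ 0 := Complex.two_pi_I_ne_zero
  have ha₀ : a ≠ 0 := norm_pos_iff.1 (ha ▸ by positivity)
  refine ⟨(c * a)⁻¹ • G, Subalgebra.smul_mem _ hG _, fun z => ?_⟩
  have hGz := hGapprox z
  rw [integral_circleIntegral_mul_inv_sub_eq_setIntegral hF hFs hr] at hGz
  calc ‖(c * a)⁻¹ * G z - F z‖
      ≤ (‖c‖ * ‖a‖)⁻¹ * (2 * Real.pi * r * ω * (2 * 10 ^ 5 * (r * C₀))) +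
          ‖a‖⁻¹ * (Real.pi * r ^ 2 * ω) :=
        norm_inv_mul_sub_le hc₀ ha₀ hGz (norm_setIntegral_ball_sub_le hF hr.le hω z)
    _ = ω * (2 * 10 ^ 5 * C₀ / Real.pi + 1) := by
        rw [hc, ha]
        field_simp
    _ ≤ ω * (2 * 10 ^ 5 * C₀ + 1) := by
        gcongr
        exact div_le_self (by positivity) (by linarith [Real.two_le_pi])

theorem mergelyan_approximation {K : Set ℂ} (hK : IsCompact K)
    (hKc : IsPreconnected Kᶜ) {f : ℂ → ℂ} (hf : ContinuousOn f K)
    (hfd : DifferentiableOn ℂ f (interior K)) {ε : ℝ} (hε : 0 < ε) :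
    ∃ p : ℂ[X], ∀ z ∈ K, ‖p.eval z - f z‖ < ε := by
  have := isCompact_iff_compactSpace.1 hK
  obtain ⟨F, hF, hFs, hFf⟩ := exists_continuous_hasCompactSupport_eqOn hK hf
  have hFd : DifferentiableOn ℂ F (interior K) := hfd.congr (hFf.mono interior_subset)
  set A := 2 * 10 ^ 5 * (∫ w, errorKernel 1 w) + 1
  have hA : 0 < A :=
    add_pos_of_nonneg_of_pos (mul_nonneg (by norm_num) (integral_nonneg (errorKernel_nonneg 1)))
      one_pos
  obtain ⟨δ, hδ, hFδ⟩ := uniformContinuous_iff.1 (hFs.uniformContinuous_of_continuous hF)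
    (ε / 2 / A) (by positivity)
  obtain ⟨Q, hQ, hQF⟩ :=
    exists_mem_uniformPolynomials_norm_sub_le_of_modulus hKc hF hFs hFd (half_pos hδ)
      fun x y hxy => by
        rw [← dist_eq_norm] at hxy ⊢
        exact (hFδ (hxy.trans_lt (half_lt_self hδ))).le
  obtain ⟨p, hp⟩ := exists_polynomial_norm_sub_lt hQ (half_pos hε)
  refine ⟨p, fun z hz => ?_⟩
  calc ‖p.eval z - f z‖
      ≤ ‖p.eval z - Q ⟨z, hz⟩‖ + ‖Q ⟨z, hz⟩ - F z‖ := by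
        rw [← hFf hz]
        exact norm_sub_le_norm_sub_add_norm_sub _ _ _
    _ < ε / 2 + ε / 2 := add_lt_add_of_lt_of_le (hp ⟨z, hz⟩) <|
        (hQF ⟨z, hz⟩).trans_eq (div_mul_cancel₀ _ hA.ne')
    _ = ε := add_halves ε

theorem edist_le_mul_eVariationOn_of_forall_lipschitzOnWith {X Y : Type*} [PseudoEMetricSpace X]
    [PseudoEMetricSpace Y] {f : X → Y} {γ : ℝ → X} {K : ℝ≥0} (hγ : ContinuousOn γ (Set.Icc 0 1))
    (hf : ∀ t ∈ Set.Icc (0 : ℝ) 1, ∃ U ∈ 𝓝 (γ t), LipschitzOnWith K f U) :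
    edist (f (γ 0)) (f (γ 1)) ≤ K * eVariationOn γ (Set.Icc 0 1) := by
  have hγ' : Continuous fun t : unitInterval => γ t := continuousOn_iff_continuous_domRestrict.1 hγ
  choose U hU hfU using fun t : unitInterval => hf t t.2
  obtain ⟨t, ht₀, ht, ⟨n, hn⟩, htU⟩ := exists_monotone_Icc_subset_open_cover_unitInterval
    (fun s => isOpen_interior.preimage hγ')
    (fun s _ => Set.mem_iUnion.2 ⟨s, mem_interior_iff_mem_nhds.2 (hU s)⟩)
  have hstep (i : ℕ) : edist (f (γ (t i))) (f (γ (t (i + 1)))) ≤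
      K * edist (γ (t i)) (γ (t (i + 1))) := by
    obtain ⟨s, hs⟩ := htU i
    have hle := ht i.le_succ
    exact hfU s (interior_subset (hs (Set.left_mem_Icc.2 hle)))
      (interior_subset (hs (Set.right_mem_Icc.2 hle)))
  calc edist (f (γ 0)) (f (γ 1))
      = edist (f (γ (t 0))) (f (γ (t n))) := by
        rw [ht₀, hn n le_rfl, Set.Icc.coe_zero, Set.Icc.coe_one]
    _ ≤ ∑ i ∈ Finset.range n, edist (f (γ (t i))) (f (γ (t (i + 1)))) :=
        edist_le_range_sum_edist (fun i => f (γ (t i))) n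
    _ ≤ ∑ i ∈ Finset.range n, K * edist (γ (t i)) (γ (t (i + 1))) :=
        Finset.sum_le_sum fun i _ => hstep i
    _ = K * ∑ i ∈ Finset.range n, edist (γ (t (i + 1))) (γ (t i)) := by
        simp only [Finset.mul_sum, edist_comm]
    _ ≤ K * eVariationOn γ (Set.Icc 0 1) := by
        gcongr
        exact eVariationOn.sum_le (u := fun i => (t i : ℝ)) (fun i j hij => ht hij) fun i => (t i).2

theorem JoinedLe.norm_sub_le {E : Type*} [NormedAddCommGroup E] [NormedSpace ℂ E] {Ω : Set ℂ}
    (hΩ : IsOpen Ω) {M : ℝ} {z w : ℂ} (h : JoinedLe Ω M z w) {D D' : ℂ → E}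
    (hD : ∀ x ∈ Ω, HasDerivAt D (D' x) x) {ε : ℝ≥0} (hD' : ∀ x ∈ Ω, ‖D' x‖ ≤ ε) :
    ‖D z - D w‖ ≤ ε * M.toNNReal := by
  obtain ⟨γ, hγ, rfl, rfl, hγΩ, hγM⟩ := h
  have hlip : ∀ t ∈ Set.Icc (0 : ℝ) 1, ∃ U ∈ 𝓝 (γ t), LipschitzOnWith ε D U := fun t ht => by
    obtain ⟨r, hr, hball⟩ := isOpen_iff.1 hΩ _ (hγΩ t ht)
    exact ⟨_, ball_mem_nhds _ hr,
      (convex_ball _ _).lipschitzOnWith_of_nnnorm_hasDerivWithin_le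
        (fun x hx => (hD x (hball hx)).hasDerivWithinAt) fun x hx => hD' x (hball hx)⟩
  have hle := (edist_le_mul_eVariationOn_of_forall_lipschitzOnWith hγ hlip).trans
    (mul_le_mul_right hγM _)
  rw [ENNReal.ofReal, ← ENNReal.coe_mul, edist_nndist, ENNReal.coe_le_coe] at hle
  rw [← dist_eq_norm]
  exact_mod_cast hle

theorem exists_polynomial_derivative_eq {k : Type*} [Field k] [CharZero k] (q : k[X]) :
    ∃ p : k[X], p.derivative = q := by
  induction q using Polynomial.induction_on' with
  | add q₁ q₂ h₁ h₂ =>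
    obtain ⟨p₁, rfl⟩ := h₁
    obtain ⟨p₂, rfl⟩ := h₂
    exact ⟨p₁ + p₂, Polynomial.derivative_add⟩
  | monomial n a =>
    refine ⟨Polynomial.monomial (n + 1) (a / (n + 1)), ?_⟩
    rw [Polynomial.derivative_monomial, Nat.add_sub_cancel, Nat.cast_succ,
      div_mul_cancel₀ _ (Nat.cast_add_one_ne_zero n)]

section PolynomialDensity

variable {Ω : Set ℂ} {M : ℝ}

theorem exists_polynomial_derivative_eq_norm_sub_le (hΩ : IsOpen Ω)
    (hjoin : ∀ z ∈ Ω, ∀ w ∈ Ω, JoinedLe Ω M z w) {u v : ℂ → ℂ} (hu : ContinuousOn u (closure Ω))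
    (huv : ∀ z ∈ Ω, HasDerivAt u (v z) z) {ε : ℝ≥0} {q : ℂ[X]}
    (hq : ∀ z ∈ Ω, ‖q.eval z - v z‖ ≤ ε) :
    ∃ p : ℂ[X], p.derivative = q ∧ ∀ z ∈ closure Ω, ‖p.eval z - u z‖ ≤ ε * M.toNNReal := by
  obtain ⟨p₀, rfl⟩ := exists_polynomial_derivative_eq q
  obtain rfl | ⟨a, ha⟩ := Ω.eq_empty_or_nonempty
  · exact ⟨p₀, rfl, by simp⟩
  let p := p₀ + Polynomial.C (u a - p₀.eval a)
  have hp' : p.derivative = p₀.derivative := by simp [p]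
  have hpa : p.eval a - u a = 0 := by simp [p]
  refine ⟨p, hp', fun z hz => le_on_closure (fun x hx => ?_)
    (p.continuous.continuousOn.sub hu).norm continuousOn_const hz⟩
  have hD : ∀ y ∈ Ω, HasDerivAt (fun y => p.eval y - u y) (p₀.derivative.eval y - v y) y :=
    fun y hy => hp' ▸ (p.hasDerivAt y).sub (huv y hy)
  simpa only [hpa, sub_zero, Pi.sub_apply] using (hjoin x hx a ha).norm_sub_le hΩ hD hq

theorem exists_polynomial_forall_iterate_derivative_norm_sub_lt (hΩ : IsOpen Ω)
    (hjoin : ∀ z ∈ Ω, ∀ w ∈ Ω, JoinedLe Ω M z w) {n : ℕ} {g : ℕ → ℂ → ℂ}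
    (hg : ∀ k < n, ContinuousOn (g k) (closure Ω))
    (hgd : ∀ k < n, ∀ z ∈ Ω, HasDerivAt (g k) (g (k + 1) z) z)
    (happrox : ∀ ε > 0, ∃ q : ℂ[X], ∀ z ∈ closure Ω, ‖q.eval z - g n z‖ < ε)
    {ε : ℝ} (hε : 0 < ε) :
    ∃ p : ℂ[X], ∀ k ≤ n, ∀ z ∈ closure Ω, ‖(Polynomial.derivative^[k] p).eval z - g k z‖ < ε := by
  induction n generalizing g ε with
  | zero =>
    obtain ⟨q, hq⟩ := happrox ε hε
    refine ⟨q, fun k hk => ?_⟩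
    obtain rfl := Nat.le_zero.1 hk
    exact hq
  | succ n ih =>
    lift ε to ℝ≥0 using hε.le
    let δ : ℝ≥0 := ε / (M.toNNReal + 1)
    have hδ : 0 < δ := div_pos (NNReal.coe_pos.1 hε) (by positivity)
    have hδε : δ ≤ ε := div_le_self ε.2 le_add_self
    have hδM : δ * M.toNNReal < ε := calc
      δ * M.toNNReal < δ * (M.toNNReal + 1) := mul_lt_mul_of_pos_left (lt_add_one _) hδ
      _ = ε := div_mul_cancel₀ _ (by positivity)
    obtain ⟨q, hq⟩ := ih (g := fun k => g (k + 1)) (fun k hk => hg _ (by omega))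
      (fun k hk => hgd _ (by omega)) happrox (NNReal.coe_pos.2 hδ)
    obtain ⟨p, rfl, hp⟩ := exists_polynomial_derivative_eq_norm_sub_le hΩ hjoin
      (hg 0 n.succ_pos) (hgd 0 n.succ_pos) fun z hz =>
        (hq 0 (Nat.zero_le n) z (subset_closure hz)).le
    refine ⟨p, fun k hk z hz => ?_⟩
    cases k with
    | zero => exact (hp z hz).trans_lt (mod_cast hδM)
    | succ k => exact (hq k (Nat.le_of_succ_le_succ hk) z hz).trans_le hδε

end PolynomialDensity

section IteratedDeriv

variable {E : Type*} [NormedAddCommGroup E] [NormedSpace ℂ E] [CompleteSpace E] {f : ℂ → E}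
  {Ω : Set ℂ}

theorem differentiableOn_iteratedDeriv (hΩ : IsOpen Ω) (hf : DifferentiableOn ℂ f Ω) (k : ℕ) :
    DifferentiableOn ℂ (iteratedDeriv k f) Ω := by
  induction k with
  | zero => rwa [iteratedDeriv_zero]
  | succ k ih => exact iteratedDeriv_succ (f := f) ▸ ih.deriv hΩ

theorem hasDerivAt_of_eqOn_iteratedDeriv (hΩ : IsOpen Ω) (hf : DifferentiableOn ℂ f Ω) {k : ℕ}
    {u v : ℂ → E} (hu : Set.EqOn u (iteratedDeriv k f) Ω)
    (hv : Set.EqOn v (iteratedDeriv (k + 1) f) Ω) {z : ℂ} (hz : z ∈ Ω) :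
    HasDerivAt u (v z) z := by
  have hd : HasDerivAt (iteratedDeriv k f) (iteratedDeriv (k + 1) f z) z := by
    rw [iteratedDeriv_succ]
    exact ((differentiableOn_iteratedDeriv hΩ hf k).differentiableAt
      (hΩ.mem_nhds hz)).hasDerivAt
  rw [hv hz]
  exact hd.congr_of_eventuallyEq (hu.eventuallyEq_of_mem (hΩ.mem_nhds hz))

end IteratedDeriv

theorem stmt5_general (Ω : Set ℂ) (hΩb : Bornology.IsBounded Ω)
    (hreg : interior (closure Ω) = Ω) (hcc : IsPreconnected (closure Ω)ᶜ)
    (M : ℝ) (hjoin : ∀ z ∈ Ω, ∀ w ∈ Ω, JoinedLe Ω M z w)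
    (f : ℂ → ℂ) (hfd : DifferentiableOn ℂ f Ω) (n : ℕ) (g : ℕ → ℂ → ℂ)
    (hgc : ∀ k ≤ n, ContinuousOn (g k) (closure Ω))
    (hgd : ∀ k ≤ n, ∀ z ∈ Ω, g k z = iteratedDeriv k f z) :
    ∀ ε > 0, ∃ P : Polynomial ℂ, ∀ k ≤ n, ∀ z ∈ closure Ω,
      ‖(Polynomial.derivative^[k] P).eval z - g k z‖ < ε := by
  have hΩ : IsOpen Ω := hreg ▸ isOpen_interior
  have hgn : DifferentiableOn ℂ (g n) (interior (closure Ω)) := by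
    rw [hreg]
    exact (differentiableOn_iteratedDeriv hΩ hfd n).congr (hgd n le_rfl)
  intro ε hε
  exact exists_polynomial_forall_iterate_derivative_norm_sub_lt hΩ hjoin
    (fun k hk => hgc k hk.le)
    (fun k hk z hz =>
      hasDerivAt_of_eqOn_iteratedDeriv hΩ hfd (hgd k hk.le) (hgd (k + 1) hk) hz)
    (fun _ => mergelyan_approximation hΩb.isCompact_closure hcc (hgc n le_rfl) hgn) hε

/-- **Polynomials are dense in `A^∞(Ω)`.** Let `Ω ⊂ ℂ` be a bounded domain with
`(closure Ω)° = Ω`, with `ℂ \ closure Ω` connected, such that any two points of `Ω` can be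
joined in `Ω` by a path of length at most `M`. If `f` is continuous on `closure Ω`,
holomorphic on `Ω`, and each derivative `f⁽ᵏ⁾` extends continuously to `closure Ω`
(the extension being `g k`), then for every `ε > 0` and `n` there is a polynomial `P` with
`|P⁽ᵏ⁾ - f⁽ᵏ⁾| < ε` on `closure Ω` for all `0 ≤ k ≤ n`. -/
theorem stmt5 (Ω : Set ℂ) (hΩo : IsOpen Ω) (hΩc : IsConnected Ω)
    (hΩb : Bornology.IsBounded Ω)
    (hreg : interior (closure Ω) = Ω)
    (hcc : IsConnected (closure Ω)ᶜ)
    (M : ℝ) (hjoin : ∀ z ∈ Ω, ∀ w ∈ Ω, JoinedLe Ω M z w)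
    (f : ℂ → ℂ) (hfc : ContinuousOn f (closure Ω)) (hfd : DifferentiableOn ℂ f Ω)
    (g : ℕ → ℂ → ℂ)
    (hg0 : ∀ z ∈ closure Ω, g 0 z = f z)
    (hgc : ∀ k, ContinuousOn (g k) (closure Ω))
    (hgd : ∀ k, ∀ z ∈ Ω, g k z = iteratedDeriv k f z) :
    ∀ ε > 0, ∀ n : ℕ, ∃ P : Polynomial ℂ, ∀ k ≤ n, ∀ z ∈ closure Ω,
      ‖(Polynomial.derivative^[k] P).eval z - g k z‖ < ε := by
  intro ε hε n
  exact stmt5_general Ω hΩb hreg hcc.isPreconnected M hjoin f hfd n g (fun k _ => hgc k)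
    (fun k _ => hgd k) ε hε
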